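/- arXiv:quant-ph/0003079 — 2 statements merged into one kernel-verified Lean document; each statement's English description precedes it below -/
import Mathlib

section
/- Fix a real number λ > 0 and let S_λ be the su(1,1)-creation weighted shift on ℓ². Then (S_λ* S_λ − S_λ S_λ*) e₀ = (1/λ) e₀, and for every n ≥ 1, (S_λ* S_λ − S_λ S_λ*) eₙ = ((λ − 1)/((n+λ)(n+λ−1))) eₙ. Consequently, if 0 < λ < 1 then ‖S_λ* e₁‖² − ‖S_λ e₁‖² = (1−λ)/(λ(λ+1)) > 0, so S_λ is not hyponormal and therefore not subnormal. -/
open ContinuousLinearMap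

/-- The Hilbert space `ℓ² = ℓ²(ℕ, ℂ)`. -/
noncomputable abbrev ell2 : Type := lp (fun _ : ℕ => ℂ) 2

/-- The standard orthonormal basis vectors `eₙ` of `ℓ²`. -/
noncomputable def stdBasis (n : ℕ) : ell2 := lp.single 2 n (1 : ℂ)

/-- A normal extension of a bounded operator `S` on a complex inner product space `H`. -/
structure NormalExtension {H : Type} [NormedAddCommGroup H] [InnerProductSpace ℂ H]
    (S : H →L[ℂ] H) : Type 1 where
  K : Type
  [instNACG : NormedAddCommGroup K]
  [instIPS : InnerProductSpace ℂ K]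
  [instCS : CompleteSpace K]
  J : H →ₗᵢ[ℂ] K
  T : K →L[ℂ] K
  normal : adjoint T ∘L T = T ∘L adjoint T
  ext : ∀ φ : H, T (J φ) = J (S φ)

/-- A bounded operator is subnormal if it admits a normal extension. -/
def Subnormal {H : Type} [NormedAddCommGroup H] [InnerProductSpace ℂ H]
    (S : H →L[ℂ] H) : Prop :=
  Nonempty (NormalExtension S)

theorem inner_stdBasis (i : ℕ) (x : ell2) : inner ℂ (stdBasis i) x = x i := by
  rw [stdBasis, lp.inner_single_left]
  simp

theorem norm_stdBasis (i : ℕ) : ‖stdBasis i‖ = 1 := by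
  rw [stdBasis, lp.norm_single (by norm_num)]
  simp

theorem stdBasis_apply (i j : ℕ) : (stdBasis i : ell2) j = if j = i then 1 else 0 := by
  rw [stdBasis, lp.coeFn_single, Pi.single_apply]

theorem adj_zero (w : ℕ → ℝ) (S : ell2 →L[ℂ] ell2)
    (hS : ∀ n : ℕ, S (stdBasis n) = ((w n : ℝ) : ℂ) • stdBasis (n + 1)) :
    adjoint S (stdBasis 0) = 0 := by
  apply lp.ext
  funext i
  rw [← inner_stdBasis, adjoint_inner_right, hS, inner_smul_left, inner_stdBasis, stdBasis_apply]
  simp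

theorem adj_succ (w : ℕ → ℝ) (S : ell2 →L[ℂ] ell2)
    (hS : ∀ n : ℕ, S (stdBasis n) = ((w n : ℝ) : ℂ) • stdBasis (n + 1)) (n : ℕ) :
    adjoint S (stdBasis (n + 1)) = ((w n : ℝ) : ℂ) • stdBasis n := by
  apply lp.ext
  funext i
  rw [← inner_stdBasis, adjoint_inner_right, hS, inner_smul_left, inner_stdBasis, stdBasis_apply,
    lp.coeFn_smul, Pi.smul_apply, stdBasis_apply]
  by_cases h : i = n
  · subst h
    simp
  · simp [h]

theorem subnormal_hyponormal (S : ell2 →L[ℂ] ell2) (h : Subnormal S) (φ : ell2) :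
    ‖adjoint S φ‖ ≤ ‖S φ‖ := by
  obtain ⟨E⟩ := h
  let _ := E.instNACG
  let _ := E.instIPS
  let _ := E.instCS
  have hn : ‖adjoint E.T (E.J φ)‖ = ‖E.T (E.J φ)‖ := by
    have h1 : inner ℂ (adjoint E.T (E.J φ)) (adjoint E.T (E.J φ))
        = inner ℂ (E.T (E.J φ)) (E.T (E.J φ)) := by
      rw [adjoint_inner_left, ← adjoint_inner_right]
      congr 1
      exact (congrArg (fun A => A (E.J φ)) E.normal).symm
    rw [inner_self_eq_norm_sq_to_K, inner_self_eq_norm_sq_to_K] at h1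
    have h2 : ‖adjoint E.T (E.J φ)‖ ^ 2 = ‖E.T (E.J φ)‖ ^ 2 := by exact_mod_cast h1
    exact (sq_eq_sq₀ (norm_nonneg _) (norm_nonneg _)).1 h2
  rw [E.ext, E.J.norm_map] at hn
  rw [← hn]
  set ψ := adjoint S φ with hψ
  have h3 : inner ℂ ψ ψ = inner ℂ (E.J ψ) (adjoint E.T (E.J φ)) := by
    rw [adjoint_inner_right E.T, E.ext, E.J.inner_map_map, ← adjoint_inner_right S, ← hψ]
  have h4 : ‖ψ‖ * ‖ψ‖ ≤ ‖ψ‖ * ‖adjoint E.T (E.J φ)‖ := by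
    have h5 := norm_inner_le_norm (𝕜 := ℂ) (E.J ψ) (adjoint E.T (E.J φ))
    rw [← h3, E.J.norm_map, inner_self_eq_norm_sq_to_K] at h5
    simpa [pow_two] using h5
  rcases (norm_nonneg ψ).eq_or_lt with h0 | h0
  · rw [← h0]
    exact norm_nonneg _
  · exact le_of_mul_le_mul_left h4 h0

/-- Fix `λ > 0` and let `S` be the su(1,1)-creation weighted shift on
`ℓ²`, `S eₙ = √((n+1)/(n+λ)) e_{n+1}`.  Then `(S*S − SS*) e₀ = (1/λ) e₀` and, for `n ≥ 1`,
`(S*S − SS*) eₙ = ((λ−1)/((n+λ)(n+λ−1))) eₙ`.  Consequently, if `0 < λ < 1` then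
`‖S* e₁‖² − ‖S e₁‖² = (1−λ)/(λ(λ+1)) > 0`, so `S` is not hyponormal and therefore not
subnormal. -/
theorem su11_creation_commutator_not_subnormal
    (lam : ℝ) (hlam : 0 < lam)
    (S : ell2 →L[ℂ] ell2)
    (hS : ∀ n : ℕ, S (stdBasis n) =
      ((Real.sqrt ((n + 1) / (n + lam)) : ℝ) : ℂ) • stdBasis (n + 1)) :
    (adjoint S ∘L S - S ∘L adjoint S) (stdBasis 0) = ((1 / lam : ℝ) : ℂ) • stdBasis 0 ∧
    (∀ n : ℕ, 1 ≤ n → (adjoint S ∘L S - S ∘L adjoint S) (stdBasis n) =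
      (((lam - 1) / ((n + lam) * (n + lam - 1)) : ℝ) : ℂ) • stdBasis n) ∧
    (lam < 1 →
      ‖adjoint S (stdBasis 1)‖ ^ 2 - ‖S (stdBasis 1)‖ ^ 2 = (1 - lam) / (lam * (lam + 1)) ∧
      0 < (1 - lam) / (lam * (lam + 1)) ∧
      ¬ (∀ φ : ell2, ‖adjoint S φ‖ ≤ ‖S φ‖) ∧
      ¬ Subnormal S) := by
  have hw : ∀ n : ℕ, ((Real.sqrt (((n : ℝ) + 1) / (n + lam)) : ℝ) : ℂ) *
      ((Real.sqrt (((n : ℝ) + 1) / (n + lam)) : ℝ) : ℂ) = (((n + 1) / (n + lam) : ℝ) : ℂ) := by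
    intro n
    rw [← Complex.ofReal_mul, Real.mul_self_sqrt (by positivity)]
  have a0 := adj_zero _ S hS
  have a1 := adj_succ _ S hS
  refine ⟨?_, ?_, ?_⟩
  · rw [sub_apply, comp_apply, comp_apply, a0, hS, map_smul, a1, smul_smul, hw]
    simp
  · intro n hn
    obtain ⟨m, rfl⟩ : ∃ m, n = m + 1 := ⟨n - 1, by omega⟩
    rw [sub_apply, comp_apply, comp_apply, a1, hS, map_smul, map_smul, a1, hS, smul_smul,
      smul_smul, hw, hw, ← sub_smul, ← Complex.ofReal_sub]
    congr 2
    have h1 : (m : ℝ) + lam ≠ 0 := by positivity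
    have h2 : (m : ℝ) + 1 + lam ≠ 0 := by positivity
    have h3 : (m : ℝ) + 1 + lam - 1 ≠ 0 := by
      rw [show (m : ℝ) + 1 + lam - 1 = m + lam by ring]
      exact h1
    push_cast
    rw [div_sub_div _ _ h2 h1, div_eq_div_iff (mul_ne_zero h2 h1) (mul_ne_zero h2 h3)]
    ring
  · intro hl
    have hpos : 0 < (1 - lam) / (lam * (lam + 1)) := by
      have : 0 < 1 - lam := by linarith
      positivity
    have key : ‖adjoint S (stdBasis 1)‖ ^ 2 - ‖S (stdBasis 1)‖ ^ 2
        = (1 - lam) / (lam * (lam + 1)) := by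
      have b := a1 0
      rw [zero_add] at b
      rw [b, hS, norm_smul, norm_smul, norm_stdBasis, norm_stdBasis, Complex.norm_real,
        Complex.norm_real, mul_one, mul_one, Real.norm_eq_abs, Real.norm_eq_abs, sq_abs, sq_abs,
        Real.sq_sqrt (by positivity), Real.sq_sqrt (by positivity)]
      push_cast
      have h2 : 1 + lam ≠ 0 := by positivity
      have h3 : lam + 1 ≠ 0 := by positivity
      rw [zero_add, zero_add, div_sub_div _ _ hlam.ne' h2,
        div_eq_div_iff (mul_ne_zero hlam.ne' h2) (mul_ne_zero hlam.ne' h3)]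
      ring
    have hh : ¬ (∀ φ : ell2, ‖adjoint S φ‖ ≤ ‖S φ‖) := by
      intro h
      have h1 := pow_le_pow_left₀ (norm_nonneg _) (h (stdBasis 1)) 2
      linarith
    exact ⟨key, hpos, hh, fun h => hh (subnormal_hyponormal S h)⟩
end

section
/- For every real number λ ≥ 1, the su(1,1)-creation weighted shift S_λ on ℓ² is subnormal: there exist a complex Hilbert space K, a linear isometry J : ℓ² → K, and a bounded normal operator T on K such that T(Jx) = J(S_λ x) for all x ∈ ℓ². In the case λ = 1, S₁ is the unilateral shift eₙ ↦ e_{n+1}, which is isometric. -/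
open ContinuousLinearMap

open MeasureTheory ProbabilityTheory in
/-- A probability measure (a beta law, or a point mass when `lam = 1`) with the right moments. -/
lemma exists_radial_measure (lam : ℝ) (hlam : 1 ≤ lam) :
    ∃ (ν : Measure ℝ) (u : ℝ → ℝ), IsProbabilityMeasure ν ∧ Measurable u ∧
      (∀ t, 0 ≤ u t) ∧ (∀ t, u t ≤ 1) ∧
      (∀ n : ℕ, 0 < ∫ t, u t ^ (2 * n) ∂ν) ∧
      ∀ n : ℕ, (∫ t, u t ^ (2 * (n + 1)) ∂ν) = (n + 1) / (n + lam) * ∫ t, u t ^ (2 * n) ∂ν := by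
  rcases hlam.eq_or_lt with h | h
  · subst h
    refine ⟨Measure.dirac 0, fun _ => 1, inferInstance, measurable_const, by simp, by simp,
      by simp, fun n => ?_⟩
    have : (n : ℝ) + 1 ≠ 0 := by positivity
    simp [this]
  · have ha : 0 < lam - 1 := by linarith
    have key : ∀ n : ℕ, (∫ t, Real.sqrt (max 0 (min 1 t)) ^ (2 * n) ∂(betaMeasure 1 (lam - 1)))
        = beta (n + 1) (lam - 1) / beta 1 (lam - 1) := by
      intro n
      have hn : (0 : ℝ) < n + 1 := by positivity
      have hb1 := beta_pos one_pos ha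
      have hbn := beta_pos hn ha
      have hnn : ∀ α : ℝ, 0 < α → ∀ x, 0 ≤ betaPDFReal α (lam - 1) x := by
        intro α hα x
        by_cases hx : 0 < x ∧ x < 1
        · exact (betaPDFReal_pos hx.1 hx.2 hα ha).le
        · simp [betaPDFReal, hx]
      have hone : ∫ x, betaPDFReal (n + 1) (lam - 1) x = 1 := by
        rw [integral_eq_lintegral_of_nonneg_ae (Filter.Eventually.of_forall (hnn _ hn))
          (measurable_betaPDFReal _ _).aestronglyMeasurable]
        have := lintegral_betaPDF_eq_one hn ha
        simp only [betaPDF] at this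
        rw [this]; simp
      have hm : Measurable (betaPDF 1 (lam - 1)) :=
        (measurable_betaPDFReal 1 (lam - 1)).ennreal_ofReal
      rw [betaMeasure, integral_withDensity_eq_integral_toReal_smul hm
        (Filter.Eventually.of_forall fun x => by simp [betaPDF])]
      have hone' : beta (n + 1) (lam - 1) / beta 1 (lam - 1) =
          ∫ x, beta (n + 1) (lam - 1) / beta 1 (lam - 1) * betaPDFReal (n + 1) (lam - 1) x := by
        rw [integral_const_mul, hone, mul_one]
      rw [hone']
      congr 1
      ext x
      rw [betaPDF, ENNReal.toReal_ofReal (hnn 1 one_pos x)]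
      by_cases hx : 0 < x ∧ x < 1
      · have e : Real.sqrt (max 0 (min 1 x)) ^ (2 * n) = x ^ n := by
          rw [min_eq_right hx.2.le, max_eq_right hx.1.le, pow_mul, Real.sq_sqrt hx.1.le]
        simp only [betaPDFReal, hx, and_self, if_true, smul_eq_mul, e]
        simp
        field_simp
      · simp [betaPDFReal, hx]
    refine ⟨betaMeasure 1 (lam - 1), fun t => Real.sqrt (max 0 (min 1 t)),
      isProbabilityMeasureBeta one_pos ha, by fun_prop, fun t => Real.sqrt_nonneg _,
      fun t => by
        refine Real.sqrt_le_one.2 ?_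
        simp, fun n => ?_, fun n => ?_⟩
    · rw [key]
      exact div_pos (beta_pos (by positivity) ha) (beta_pos one_pos ha)
    · rw [key, key]
      have h1 : (0 : ℝ) < n + 1 := by positivity
      have h2 : (0 : ℝ) < n + lam := by positivity
      have hb1 := beta_pos one_pos ha
      have g1 := Real.Gamma_add_one h1.ne'
      have g2 := Real.Gamma_add_one h2.ne'
      have hg := Real.Gamma_pos_of_pos h2
      have e : beta ((n + 1 : ℕ) + 1) (lam - 1) = (n + 1) / (n + lam) * beta (n + 1) (lam - 1) := by
        simp only [beta]
        have e1 : ((n + 1 : ℕ) + 1 + (lam - 1) : ℝ) = n + lam + 1 := by push_cast; ring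
        have e2 : (n + 1 + (lam - 1) : ℝ) = n + lam := by ring
        rw [e1, e2, g2]
        push_cast
        rw [g1]
        field_simp
      rw [e, mul_div_assoc]

open MeasureTheory in
/-- Multiplication by an `L^∞` function on `L²`. -/
noncomputable def mulOp {X : Type} [MeasurableSpace X] (μ : Measure X) (w : X → ℂ)
    (hw : MemLp w ⊤ μ) : Lp ℂ 2 μ →L[ℂ] Lp ℂ 2 μ :=
  (ContinuousLinearMap.mul ℂ ℂ).holderL μ ⊤ 2 2 (hw.toLp w)

open MeasureTheory in
lemma coeFn_mulOp {X : Type} [MeasurableSpace X] (μ : Measure X) (w : X → ℂ)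
    (hw : MemLp w ⊤ μ) (f : Lp ℂ 2 μ) : mulOp μ w hw f =ᵐ[μ] fun x => w x * f x := by
  have h := (ContinuousLinearMap.mul ℂ ℂ).coeFn_holder (r := 2) (hw.toLp w) f
  have e : mulOp μ w hw f = (ContinuousLinearMap.mul ℂ ℂ).holder 2 (hw.toLp w) f := rfl
  rw [e]
  filter_upwards [h, hw.coeFn_toLp] with x h1 h2
  rw [h1, h2]; rfl

open MeasureTheory in
lemma adjoint_mulOp {X : Type} [MeasurableSpace X] (μ : Measure X) (w : X → ℂ)
    (hw : MemLp w ⊤ μ) (hw' : MemLp (fun x => star (w x)) ⊤ μ) :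
    adjoint (mulOp μ w hw) = mulOp μ (fun x => star (w x)) hw' := by
  symm
  rw [ContinuousLinearMap.eq_adjoint_iff]
  intro f g
  rw [L2.inner_def, L2.inner_def]
  apply integral_congr_ae
  filter_upwards [coeFn_mulOp μ w hw g, coeFn_mulOp μ _ hw' f] with x h1 h2
  rw [h1, h2]
  simp [RCLike.inner_apply]
  ring

open MeasureTheory in
lemma normal_mulOp {X : Type} [MeasurableSpace X] (μ : Measure X) (w : X → ℂ)
    (hw : MemLp w ⊤ μ) :
    adjoint (mulOp μ w hw) ∘L mulOp μ w hw = mulOp μ w hw ∘L adjoint (mulOp μ w hw) := by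
  have hs : MemLp (fun x => star (w x)) ⊤ μ := hw.star
  rw [adjoint_mulOp μ w hw hs]
  ext1 f
  simp only [ContinuousLinearMap.comp_apply]
  apply Lp.ext
  filter_upwards [coeFn_mulOp μ w hw f, coeFn_mulOp μ _ hs f,
    coeFn_mulOp μ w hw (mulOp μ _ hs f), coeFn_mulOp μ _ hs (mulOp μ w hw f)]
    with x h1 h2 h3 h4
  rw [h3, h4, h1, h2]
  ring

lemma ell2_ext {E : Type} [NormedAddCommGroup E] [NormedSpace ℂ E] (A B : ell2 →L[ℂ] E)
    (h : ∀ n, A (stdBasis n) = B (stdBasis n)) : A = B := by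
  ext1 x
  have hx := lp.hasSum_single (p := 2) (by simp) x
  have e : ∀ n, lp.single 2 n (x n) = x n • stdBasis n := by
    intro n
    rw [stdBasis, ← lp.single_smul]; simp
  have h1 := hx.mapL A
  have h2 := hx.mapL B
  refine h1.unique ?_
  convert h2 using 2 with n
  rw [e, map_smul, map_smul, h]

/-- An orthonormal sequence shifted by `T` with the right weights makes `S` subnormal. -/
lemma orthonormal_ext {K : Type} [NormedAddCommGroup K] [InnerProductSpace ℂ K] [CompleteSpace K]
    (S : ell2 →L[ℂ] ell2) (c : ℕ → ℂ) (hS : ∀ n, S (stdBasis n) = c n • stdBasis (n + 1))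
    (T : K →L[ℂ] K) (v : ℕ → K) (hv : Orthonormal ℂ v)
    (hT : ∀ n, T (v n) = c n • v (n + 1)) :
    ∃ J : ell2 →ₗᵢ[ℂ] K, ∀ x, T (J x) = J (S x) := by
  let J : ell2 →ₗᵢ[ℂ] K := hv.orthogonalFamily.linearIsometry
  have hJ : ∀ n, J (stdBasis n) = v n := by
    intro n
    have := hv.orthogonalFamily.linearIsometry_apply_single (i := n) (1 : ℂ)
    exact this.trans (by simp)
  refine ⟨J, fun x => ?_⟩
  have := ell2_ext (T ∘L J.toContinuousLinearMap) (J.toContinuousLinearMap ∘L S) (by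
    intro n
    simp [hJ, hS, hT])
  exact DFunLike.congr_fun this x

open MeasureTheory AddCircle in
lemma subnormal_of_radial (S : ell2 →L[ℂ] ell2) (c : ℕ → ℝ) (hc : ∀ n, 0 ≤ c n)
    (hS : ∀ n, S (stdBasis n) = ((Real.sqrt (c n) : ℝ) : ℂ) • stdBasis (n + 1))
    (ν : Measure ℝ) [IsProbabilityMeasure ν] (u : ℝ → ℝ) (hum : Measurable u)
    (hu0 : ∀ t, 0 ≤ u t) (hu1 : ∀ t, u t ≤ 1)
    (hpos : ∀ n : ℕ, 0 < ∫ t, u t ^ (2 * n) ∂ν)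
    (hrec : ∀ n : ℕ, (∫ t, u t ^ (2 * (n + 1)) ∂ν) = c n * ∫ t, u t ^ (2 * n) ∂ν) :
    Subnormal S := by
  have : Fact (0 < (1 : ℝ)) := ⟨one_pos⟩
  set m : ℕ → ℝ := fun n => ∫ t, u t ^ (2 * n) ∂ν with hm
  let μ : Measure (ℝ × AddCircle (1 : ℝ)) := ν.prod haarAddCircle
  let w : ℝ × AddCircle (1 : ℝ) → ℂ := fun p => (u p.1 : ℂ) * fourier 1 p.2
  have hwm : Measurable w := by
    have h1 : Measurable (fun p : ℝ × AddCircle (1 : ℝ) => (u p.1 : ℂ)) := by fun_prop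
    have h2 : Measurable (fun p : ℝ × AddCircle (1 : ℝ) => fourier 1 p.2) :=
      ((fourier (T := (1 : ℝ)) 1).continuous.measurable).comp measurable_snd
    exact h1.mul h2
  have hwb : ∀ p, ‖w p‖ ≤ 1 := by
    intro p
    have : ‖fourier (T := (1 : ℝ)) 1 p.2‖ = 1 := Circle.norm_coe _
    simp only [w, norm_mul, this, mul_one, Complex.norm_real, Real.norm_eq_abs, abs_of_nonneg (hu0 _)]
    exact hu1 _
  have hpow : ∀ n : ℕ, ∀ q, MemLp (fun p => w p ^ n) q μ := by
    intro n q
    refine MemLp.of_bound (hwm.pow_const n).aestronglyMeasurable 1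
      (Filter.Eventually.of_forall fun p => ?_)
    rw [norm_pow]
    exact pow_le_one₀ (norm_nonneg _) (hwb p)
  have hw : MemLp w ⊤ μ := by simpa using hpow 1 ⊤
  let g : ℕ → Lp ℂ 2 μ := fun n => (hpow n 2).toLp _
  have hfpow : ∀ (n : ℕ) (x : AddCircle (1 : ℝ)), fourier 1 x ^ n = fourier (n : ℤ) x := by
    intro n x
    induction n with
    | zero => simp
    | succ k ih => rw [pow_succ, ih, Nat.cast_succ, fourier_add]
  have hginner : ∀ i j : ℕ, inner ℂ (g i) (g j) = if i = j then (m i : ℂ) else 0 := by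
    intro i j
    rw [L2.inner_def]
    have : ∫ p, inner ℂ (g i p) (g j p) ∂μ
        = ∫ p : ℝ × AddCircle (1 : ℝ), ((u p.1 ^ (i + j) : ℝ) : ℂ) * fourier ((j : ℤ) - i) p.2 ∂μ := by
      apply integral_congr_ae
      filter_upwards [(hpow i 2).coeFn_toLp, (hpow j 2).coeFn_toLp] with p h1 h2
      rw [h1, h2]
      simp only [RCLike.inner_apply, w, mul_pow, hfpow, map_mul, map_pow, Complex.conj_ofReal]
      rw [← fourier_neg, sub_eq_add_neg, fourier_add]
      push_cast
      ring
    rw [this, integral_prod_mul (fun t : ℝ => ((u t ^ (i + j) : ℝ) : ℂ))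
      (fun x : AddCircle (1 : ℝ) => fourier ((j : ℤ) - i) x)]
    split_ifs with h
    · subst h
      rw [integral_complex_ofReal]
      simp [hm, two_mul]
    · have hij : (j : ℤ) - i ≠ 0 := by omega
      have := integral_eq_zero_of_add_right_eq_neg (μ := haarAddCircle (T := (1 : ℝ)))
        (fourier_add_half_inv_index hij one_pos)
      rw [this, mul_zero]
  have hmsq : ∀ n, ((Real.sqrt (m n) : ℝ) : ℂ) ≠ 0 := by
    intro n
    exact_mod_cast (Real.sqrt_pos.2 (hpos n)).ne'
  have hmm : ∀ n, ((Real.sqrt (m n) : ℝ) : ℂ) * ((Real.sqrt (m n) : ℝ) : ℂ) = m n := by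
    intro n
    exact_mod_cast Real.mul_self_sqrt (hpos n).le
  let v : ℕ → Lp ℂ 2 μ := fun n => ((Real.sqrt (m n) : ℝ) : ℂ)⁻¹ • g n
  have hv : Orthonormal ℂ v := by
    rw [orthonormal_iff_ite]
    intro i j
    simp only [v, inner_smul_left, inner_smul_right, hginner]
    split_ifs with h
    · subst h
      rw [← hmm i, map_inv₀, Complex.conj_ofReal]
      field_simp [hmsq i]
    · simp
  have hTg : ∀ n, mulOp μ w hw (g n) = g (n + 1) := by
    intro n
    apply Lp.ext
    filter_upwards [coeFn_mulOp μ w hw (g n), (hpow n 2).coeFn_toLp, (hpow (n+1) 2).coeFn_toLp]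
      with p h1 h2 h3
    rw [h1, h2, h3, pow_succ, mul_comm]
  obtain ⟨J, hJ⟩ := orthonormal_ext S _ hS (mulOp μ w hw) v hv (by
    intro n
    simp only [v, map_smul, hTg, smul_smul]
    congr 1
    have e : Real.sqrt (m (n + 1)) = Real.sqrt (c n) * Real.sqrt (m n) := by
      rw [← Real.sqrt_mul (hc n)]
      exact congrArg _ (hrec n)
    have h1 := hmsq n
    have h2 := hmsq (n + 1)
    have e' : ((Real.sqrt (m (n + 1)) : ℝ) : ℂ) = Real.sqrt (c n) * Real.sqrt (m n) := by
      rw [e]; push_cast; rfl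
    field_simp
    rw [e', mul_comm])
  exact ⟨{ K := Lp ℂ 2 μ, J := J, T := mulOp μ w hw, normal := normal_mulOp μ w hw, ext := hJ }⟩

/-- For every real `λ ≥ 1`, the su(1,1)-creation weighted shift `S_λ` on
`ℓ²` (with `S_λ eₙ = √((n+1)/(n+λ)) e_{n+1}`) is subnormal.  In the case `λ = 1`, `S₁` is
the unilateral shift `eₙ ↦ e_{n+1}`, which is isometric. -/
theorem su11_creation_subnormal
    (lam : ℝ) (hlam : 1 ≤ lam)
    (S : ell2 →L[ℂ] ell2)
    (hS : ∀ n : ℕ, S (stdBasis n) =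
      ((Real.sqrt ((n + 1) / (n + lam)) : ℝ) : ℂ) • stdBasis (n + 1)) :
    Subnormal S ∧
      (lam = 1 → (∀ n : ℕ, S (stdBasis n) = stdBasis (n + 1)) ∧ ∀ x : ell2, ‖S x‖ = ‖x‖) := by
  refine ⟨?_, ?_⟩
  · obtain ⟨ν, u, hν, hum, hu0, hu1, hpos, hrec⟩ := exists_radial_measure lam hlam
    exact subnormal_of_radial S (fun n => (n + 1) / (n + lam)) (fun n => by positivity) hS
      ν u hum hu0 hu1 hpos hrec
  · rintro rfl
    have h1 : ∀ n : ℕ, S (stdBasis n) = stdBasis (n + 1) := by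
      intro n
      have : (n : ℝ) + 1 ≠ 0 := by positivity
      rw [hS, div_self this]
      simp
    refine ⟨h1, ?_⟩
    have ho : Orthonormal ℂ stdBasis := by
      rw [orthonormal_iff_ite]
      intro i j
      rw [stdBasis, lp.inner_single_left, stdBasis, lp.single_apply]
      by_cases h : i = j
      · subst h; simp
      · simp [h]
    have hv : Orthonormal ℂ (fun n => stdBasis (n + 1)) := ho.comp _ (add_left_injective 1)
    let J : ell2 →ₗᵢ[ℂ] ell2 := hv.orthogonalFamily.linearIsometry
    have hJ : ∀ n, J (stdBasis n) = stdBasis (n + 1) := by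
      intro n
      have := hv.orthogonalFamily.linearIsometry_apply_single (i := n) (1 : ℂ)
      exact this.trans (by simp)
    have e : S = J.toContinuousLinearMap := ell2_ext _ _ (fun n => by simp [h1, hJ])
    intro x
    rw [e]
    exact J.norm_map x
end
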